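/- Let (E₀,E₁) and (F₀,F₁) be Banach couples, ρ a function parameter of class ℬ^{+−}, γ(t) = 1/ρ̄(t⁻¹), and let E and F be Banach spaces of class K_γ(E₀,E₁) and K_ρ(F₀,F₁) respectively; let G be any Banach space. If T is a bounded bilinear operator from (E₀+E₁)×(F₀+F₁) into G which is compact from E₀×F₀ into G, then T is compact from E×F into G. -/

import Mathlib

open Filter Set MeasureTheory ENNReal NNReal

noncomputable section

/-! ### Function parameters -/

/-- `rbar ρ s = sup_{t>0} ρ(s t)/ρ(t)`. -/
def rbar (ρ : ℝ → ℝ) (s : ℝ) : ℝ := sSup {r : ℝ | ∃ t > 0, r = ρ (s * t) / ρ t}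

/-- The class `ℬ` of function parameters. -/
structure IsClassB (ρ : ℝ → ℝ) : Prop where
  pos : ∀ t > 0, 0 < ρ t
  cont : ContinuousOn ρ (Set.Ioi 0)
  one : ρ 1 = 1
  bdd : ∀ s > 0, BddAbove {r : ℝ | ∃ t > 0, r = ρ (s * t) / ρ t}

/-- The class `ℬ^{+-}` of function parameters. -/
structure IsClassBpm (ρ : ℝ → ℝ) extends IsClassB ρ : Prop where
  integ : MeasureTheory.IntegrableOn (fun t => min 1 t⁻¹ * rbar ρ t * t⁻¹) (Set.Ioi 0)

/-- Pseudo-concavity of a function parameter. -/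
def IsPseudoConcave (ρ : ℝ → ℝ) : Prop :=
  ∃ C > 0, ∀ s > 0, ∀ t > 0, ρ t ≤ C * max 1 (t / s) * ρ s

/-! ### `ℓ^q` norms of two-sided sequences with values in `ℝ≥0∞` -/

/-- The `ℓ^q(ℤ)` norm of a sequence of extended reals. -/
def eLq (q : ℝ≥0∞) (a : ℤ → ℝ≥0∞) : ℝ≥0∞ :=
  if q = ∞ then ⨆ n, a n else (∑' n, a n ^ q.toReal) ^ (1 / q.toReal)

/-! ### Extended-real-valued norms -/

/-- `N : V → ℝ≥0∞` is a complete (Banach) extended norm; its finiteness set is the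
underlying Banach space. -/
structure IsENorm {V : Type*} [AddCommGroup V] [Module ℝ V] (N : V → ℝ≥0∞) : Prop where
  map_zero : N 0 = 0
  eq_zero : ∀ x, N x = 0 → x = 0
  add_le : ∀ x y, N (x + y) ≤ N x + N y
  smul : ∀ (c : ℝ) (x : V), N (c • x) = ENNReal.ofReal |c| * N x
  complete : ∀ u : ℕ → V, (∀ n, N (u n) ≠ ∞) →
    (∀ ε : ℝ, 0 < ε → ∃ n₀ : ℕ, ∀ m ≥ n₀, ∀ n ≥ n₀, N (u m - u n) < ENNReal.ofReal ε) →
    ∃ x, N x ≠ ∞ ∧ Filter.Tendsto (fun n => N (u n - x)) Filter.atTop (nhds 0)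

/-! ### Banach couples realized inside an ambient space -/

section Couple

variable {E₀ E₁ V : Type*} [NormedAddCommGroup E₀] [NormedSpace ℝ E₀]
  [NormedAddCommGroup E₁] [NormedSpace ℝ E₁] [AddCommGroup V] [Module ℝ V]

/-- The extended norm on the ambient space induced by the embedding of one Banach space:
`∞` outside the range of the embedding. -/
def enormOf {E : Type*} [NormedAddCommGroup E] [NormedSpace ℝ E] (i : E →ₗ[ℝ] V) (x : V) : ℝ≥0∞ :=
  ⨅ (a : E) (_ : i a = x), (‖a‖₊ : ℝ≥0∞)

/-- The `K`-functional of the couple `(E₀, E₁)`. -/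
def eKfun (i₀ : E₀ →ₗ[ℝ] V) (i₁ : E₁ →ₗ[ℝ] V) (t : ℝ) (x : V) : ℝ≥0∞ :=
  ⨅ (a : E₀) (b : E₁) (_ : x = i₀ a + i₁ b), ENNReal.ofReal (‖a‖ + t * ‖b‖)

/-- The extended norm of `E₀ + E₁`. -/
def esumNorm (i₀ : E₀ →ₗ[ℝ] V) (i₁ : E₁ →ₗ[ℝ] V) (x : V) : ℝ≥0∞ := eKfun i₀ i₁ 1 x

/-- The extended norm of `E₀ ∩ E₁`. -/
def einterNorm (i₀ : E₀ →ₗ[ℝ] V) (i₁ : E₁ →ₗ[ℝ] V) (x : V) : ℝ≥0∞ :=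
  max (enormOf i₀ x) (enormOf i₁ x)

/-- The extended norm of the interpolation space `(E₀,E₁)_{ρ,q;K}`. -/
def eKNorm (i₀ : E₀ →ₗ[ℝ] V) (i₁ : E₁ →ₗ[ℝ] V) (ρ : ℝ → ℝ) (q : ℝ≥0∞) (x : V) : ℝ≥0∞ :=
  eLq q (fun n => eKfun i₀ i₁ ((2 : ℝ) ^ n) x / ENNReal.ofReal (ρ ((2 : ℝ) ^ n)))

/-- `(a, b)` is a `J`-representation of `x`: `u_n = a n = b n ∈ E₀ ∩ E₁` and
`x = ∑_{n ∈ ℤ} u_n` with convergence in `E₀ + E₁`. -/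
def IsJRep (i₀ : E₀ →ₗ[ℝ] V) (i₁ : E₁ →ₗ[ℝ] V) (x : V) (a : ℤ → E₀) (b : ℤ → E₁) : Prop :=
  (∀ n, i₀ (a n) = i₁ (b n)) ∧
  ∀ ε : ℝ, 0 < ε → ∃ F : Finset ℤ, ∀ G : Finset ℤ, F ⊆ G →
    esumNorm i₀ i₁ (x - ∑ n ∈ G, i₀ (a n)) < ENNReal.ofReal ε

/-- The extended norm of the interpolation space `(E₀,E₁)_{ρ,q;J}`. -/
def eJNorm (i₀ : E₀ →ₗ[ℝ] V) (i₁ : E₁ →ₗ[ℝ] V) (ρ : ℝ → ℝ) (q : ℝ≥0∞) (x : V) : ℝ≥0∞ :=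
  ⨅ (a : ℤ → E₀) (b : ℤ → E₁) (_ : IsJRep i₀ i₁ x a b),
    eLq q (fun n => ENNReal.ofReal (max ‖a n‖ ((2 : ℝ) ^ n * ‖b n‖) / ρ ((2 : ℝ) ^ n)))

/-- `(E₀, E₁)` is a Banach couple: both spaces are complete and continuously embedded
in the Hausdorff topological vector space `V`. -/
structure IsBanachCouple [TopologicalSpace V] (i₀ : E₀ →ₗ[ℝ] V) (i₁ : E₁ →ₗ[ℝ] V) : Prop where
  t2 : T2Space V
  contAdd : ContinuousAdd V
  contSMul : ContinuousSMul ℝ V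
  complete₀ : CompleteSpace E₀
  complete₁ : CompleteSpace E₁
  inj₀ : Function.Injective i₀
  inj₁ : Function.Injective i₁
  cont₀ : Continuous i₀
  cont₁ : Continuous i₁

/-- `N` is (the extended norm of) an intermediate space for the couple `(E₀, E₁)`. -/
def IsIntermediate (i₀ : E₀ →ₗ[ℝ] V) (i₁ : E₁ →ₗ[ℝ] V) (N : V → ℝ≥0∞) : Prop :=
  IsENorm N ∧
  (∃ C > 0, ∀ x : V, N x ≤ ENNReal.ofReal C * einterNorm i₀ i₁ x) ∧
  (∃ C > 0, ∀ x : V, esumNorm i₀ i₁ x ≤ ENNReal.ofReal C * N x)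

/-- `N` is an intermediate space of class `J_ρ(E₀,E₁)`, i.e. `(E₀,E₁)_{ρ,1;J} ↪ N`. -/
def IsClassJ (i₀ : E₀ →ₗ[ℝ] V) (i₁ : E₁ →ₗ[ℝ] V) (ρ : ℝ → ℝ) (N : V → ℝ≥0∞) : Prop :=
  IsIntermediate i₀ i₁ N ∧ ∃ C > 0, ∀ x : V, N x ≤ ENNReal.ofReal C * eJNorm i₀ i₁ ρ 1 x

/-- `N` is an intermediate space of class `K_ρ(E₀,E₁)`, i.e. `N ↪ (E₀,E₁)_{ρ,∞;K}`. -/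
def IsClassK (i₀ : E₀ →ₗ[ℝ] V) (i₁ : E₁ →ₗ[ℝ] V) (ρ : ℝ → ℝ) (N : V → ℝ≥0∞) : Prop :=
  IsIntermediate i₀ i₁ N ∧ ∃ C > 0, ∀ x : V, eKNorm i₀ i₁ ρ ⊤ x ≤ ENNReal.ofReal C * N x

end Couple

/-! ### The approximation hypothesis (AP) -/

/-- The couple with extended norms `N₀, N₁` satisfies the approximation hypothesis (AP). -/
def SatisfiesAP {V : Type*} [AddCommGroup V] [Module ℝ V] (N₀ N₁ : V → ℝ≥0∞) : Prop :=
  ∃ (P Pp Pm : ℕ → V →ₗ[ℝ] V) (C : ℝ≥0∞) (c : ℕ → ℝ≥0∞),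
    0 < C ∧ C ≠ ∞ ∧ Filter.Tendsto c Filter.atTop (nhds 0) ∧
    (∀ (n : ℕ) (x y : V), N₀ x ≠ ∞ → N₁ y ≠ ∞ →
      (P n (x + y) + Pp n (x + y) + Pm n (x + y) = x + y ∧
        N₀ (P n (x + y)) ≠ ∞ ∧ N₁ (P n (x + y)) ≠ ∞)) ∧
    (∀ n x, N₀ (P n x) ≤ C * N₀ x) ∧ (∀ n x, N₁ (P n x) ≤ C * N₁ x) ∧
    (∀ n x, N₀ (Pp n x) ≤ C * N₀ x) ∧ (∀ n x, N₁ (Pp n x) ≤ C * N₁ x) ∧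
    (∀ n x, N₀ (Pm n x) ≤ C * N₀ x) ∧ (∀ n x, N₁ (Pm n x) ≤ C * N₁ x) ∧
    (∀ n x, N₀ x ≠ ∞ → N₁ (Pp n x) ≤ c n * N₀ x) ∧
    (∀ n x, N₁ x ≠ ∞ → N₀ (Pm n x) ≤ c n * N₁ x)

/-! ### Bilinear operators -/

section Bilinear

variable {VE VF VG : Type*} [AddCommGroup VG]

/-- The norm of a bilinear operator between spaces given by extended norms. -/
def eBilNorm (NE : VE → ℝ≥0∞) (NF : VF → ℝ≥0∞) (NG : VG → ℝ≥0∞) (T : VE → VF → VG) : ℝ≥0∞ :=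
  ⨆ (x : VE) (_ : NE x ≤ 1) (y : VF) (_ : NF y ≤ 1), NG (T x y)

/-- Boundedness of a bilinear operator between spaces given by extended norms. -/
def eBilBdd (NE : VE → ℝ≥0∞) (NF : VF → ℝ≥0∞) (NG : VG → ℝ≥0∞) (T : VE → VF → VG) : Prop :=
  ∃ M : ℝ≥0, ∀ x y, NG (T x y) ≤ (M : ℝ≥0∞) * NE x * NF y

/-- Compactness of a bilinear operator: the image of the product of unit balls is
totally bounded in the target. -/
def eBilCompact (NE : VE → ℝ≥0∞) (NF : VF → ℝ≥0∞) (NG : VG → ℝ≥0∞) (T : VE → VF → VG) : Prop :=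
  ∀ ε : ℝ, 0 < ε → ∃ D : Finset VG, ∀ x y, NE x ≤ 1 → NF y ≤ 1 →
    ∃ c ∈ D, NG (T x y - c) < ENNReal.ofReal ε

end Bilinear

/-! ### A generic K-functional for a couple given by two extended norms -/

/-- Generic `K`-functional for a couple described by two extended norms on `W`. -/
def eKgen {W : Type*} [AddCommGroup W] (N₀ N₁ : W → ℝ≥0∞) (t : ℝ) (x : W) : ℝ≥0∞ :=
  ⨅ y : W, (N₀ (x - y) + ENNReal.ofReal t * N₁ y)

/-- The `(ρ,q;K)`-interpolation extended norm for a couple given by two extended norms. -/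
def eKNormGen {W : Type*} [AddCommGroup W] (N₀ N₁ : W → ℝ≥0∞) (ρ : ℝ → ℝ) (q : ℝ≥0∞)
    (x : W) : ℝ≥0∞ :=
  eLq q (fun n => eKgen N₀ N₁ ((2 : ℝ) ^ n) x / ENNReal.ofReal (ρ ((2 : ℝ) ^ n)))

/-! ### Lions and Persson approximation conditions -/

section LP

variable {E₀ E₁ V : Type*} [NormedAddCommGroup E₀] [NormedSpace ℝ E₀]
  [NormedAddCommGroup E₁] [NormedSpace ℝ E₁] [AddCommGroup V] [Module ℝ V]

theorem rho_le_rbar {ρ : ℝ → ℝ} (h : IsClassB ρ) {s t : ℝ} (hs : 0 < s) (ht : 0 < t) :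
    ρ (s * t) ≤ rbar ρ s * ρ t := by
  have : ρ (s * t) / ρ t ≤ rbar ρ s := le_csSup (h.bdd s hs) ⟨t, ht, rfl⟩
  exact (div_le_iff₀ (h.pos t ht)).1 this

theorem rho_le_rbar' {ρ : ℝ → ℝ} (h : IsClassB ρ) {s : ℝ} (hs : 0 < s) :
    ρ s ≤ rbar ρ s := by
  have := rho_le_rbar h hs one_pos
  simpa [h.one] using this

theorem gamma_pos {ρ : ℝ → ℝ} (h : IsClassB ρ) {s : ℝ} (hs : 0 < s) :
    0 < (rbar ρ s⁻¹)⁻¹ :=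
  inv_pos.2 ((h.pos _ (inv_pos.2 hs)).trans_le (rho_le_rbar' h (inv_pos.2 hs)))

theorem gamma_le {ρ : ℝ → ℝ} (h : IsClassB ρ) {s : ℝ} (hs : 0 < s) :
    (rbar ρ s⁻¹)⁻¹ ≤ ρ s := by
  have h1 := rho_le_rbar h (inv_pos.2 hs) hs
  rw [inv_mul_cancel₀ hs.ne', h.one] at h1
  have h2 := gamma_pos h hs
  exact (inv_le_iff_one_le_mul₀' (inv_pos.1 h2)).2 h1

theorem exists_small {ρ : ℝ → ℝ} (h : IsClassBpm ρ) {δ : ℝ} (hδ : 0 < δ) :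
    ∃ n : ℕ, ρ ((2 : ℝ) ^ n) < δ * 2 ^ n := by
  by_contra! hc
  set g : ℝ → ℝ := fun t => min 1 t⁻¹ * rbar ρ t * t⁻¹ with hg
  set k : ℝ → ℝ := fun u => min 1 (Real.exp u)⁻¹ * rbar ρ (Real.exp u) with hk
  have hint : Integrable k := by
    have h1 := (integrableOn_image_iff_integrableOn_abs_deriv_smul (s := Set.univ)
      (f := Real.exp) (f' := Real.exp) MeasurableSet.univ
      (fun x _ => (Real.hasDerivAt_exp x).hasDerivWithinAt)
      (Real.exp_injective.injOn) g).1 (by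
        rw [Set.image_univ, Real.range_exp]; exact h.integ)
    rw [integrableOn_univ] at h1
    refine h1.congr (Filter.Eventually.of_forall fun u => ?_)
    have := Real.exp_pos u
    simp only [hg, hk, smul_eq_mul, abs_of_pos this]
    field_simp
  have hk0 : ∀ u, 0 ≤ k u := fun u => by
    have h1 := Real.exp_pos u
    have := (h.pos _ h1).trans_le (rho_le_rbar' h.toIsClassB h1)
    simp only [hk]; positivity
  set η : ℝ := min 1 δ with hη
  have hη0 : 0 < η := by positivity
  have key : ∀ n : ℕ, (n * Real.log 2) * η ≤ 2 * ∫ u, k u := by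
    intro n
    set N : ℝ := n * Real.log 2 with hN
    have hN0 : 0 ≤ N := by positivity
    have hexp : Real.exp N = 2 ^ n := by
      rw [hN, Real.exp_nat_mul, Real.exp_log two_pos]
    have hint2 : Integrable (fun u => k (N - u)) := hint.comp_sub_left N
    have hs : Integrable (fun u => k u + k (N - u)) := hint.add hint2
    have e1 : ∫ u, (k u + k (N - u)) = 2 * ∫ u, k u := by
      rw [integral_add hint hint2, integral_sub_left_eq_self k volume N]; ring
    rw [← e1]
    have e2 : ∫ u in Set.Icc 0 N, (k u + k (N - u)) ≤ ∫ u, (k u + k (N - u)) :=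
      setIntegral_le_integral hs
        (Filter.Eventually.of_forall fun u => add_nonneg (hk0 u) (hk0 _))
    refine le_trans ?_ e2
    have e3 : ∫ u in Set.Icc 0 N, η = N * η := by
      simp [hN0]
    rw [← e3]
    refine setIntegral_mono_on continuous_const.integrableOn_Icc hs.integrableOn measurableSet_Icc ?_
    intro u hu
    have f : ∀ v, 0 ≤ v → k v = (Real.exp v)⁻¹ * rbar ρ (Real.exp v) := by
      intro v hv
      simp only [hk]
      rw [min_eq_right (inv_le_one_of_one_le₀ (Real.one_le_exp hv))]
    have hp : δ ≤ k u * k (N - u) := by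
      rw [f u hu.1, f (N - u) (by linarith [hu.2])]
      have p1 := Real.exp_pos u
      have p2 := Real.exp_pos (N - u)
      have q1 := rho_le_rbar h.toIsClassB p1 p2
      have q2 := rho_le_rbar' h.toIsClassB p2
      have q3 : 0 ≤ rbar ρ (Real.exp u) :=
        ((h.pos _ p1).trans_le (rho_le_rbar' h.toIsClassB p1)).le
      have ee : Real.exp u * Real.exp (N - u) = 2 ^ n := by
        rw [← Real.exp_add, ← hexp]; congr 1; ring
      rw [ee] at q1
      have q4 := (hc n).trans (q1.trans (mul_le_mul_of_nonneg_left q2 q3))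
      rw [← ee] at q4
      have : (Real.exp u)⁻¹ * rbar ρ (Real.exp u) *
          ((Real.exp (N - u))⁻¹ * rbar ρ (Real.exp (N - u))) =
          (rbar ρ (Real.exp u) * rbar ρ (Real.exp (N - u))) /
            (Real.exp u * Real.exp (N - u)) := by field_simp
      rw [this, le_div_iff₀ (by positivity)]
      exact q4
    have a1 := hk0 u
    have a2 := hk0 (N - u)
    have m1 : η ≤ 1 := min_le_left _ _
    have m2 : η ≤ δ := min_le_right _ _
    by_contra! hlt
    have : k u * k (N - u) ≤ k u * 1 :=
      mul_le_mul_of_nonneg_left (by linarith) a1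
    linarith
  obtain ⟨n, hn⟩ := exists_nat_gt ((2 * ∫ u, k u) / (Real.log 2 * η))
  have hl : 0 < Real.log 2 := Real.log_pos one_lt_two
  rw [div_lt_iff₀ (by positivity)] at hn
  have := key n
  linarith

theorem classK_decomp {E₀ E₁ V : Type*} [NormedAddCommGroup E₀] [NormedSpace ℝ E₀]
    [NormedAddCommGroup E₁] [NormedSpace ℝ E₁] [AddCommGroup V] [Module ℝ V]
    (i₀ : E₀ →ₗ[ℝ] V) (i₁ : E₁ →ₗ[ℝ] V) (γ ρ : ℝ → ℝ) (hγ : ∀ t > 0, 0 < γ t)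
    (hle : ∀ t > 0, γ t ≤ ρ t) (N : V → ℝ≥0∞) (hN : IsClassK i₀ i₁ γ N) :
    ∃ C : ℝ, 0 < C ∧ ∀ x, N x ≤ 1 → esumNorm i₀ i₁ x ≤ ENNReal.ofReal C ∧
      ∀ n : ℕ, ∃ a b, x = i₀ a + i₁ b ∧ ‖a‖ + 2 ^ n * ‖b‖ ≤ C * ρ (2 ^ n) := by
  obtain ⟨⟨-, -, C₁, hC₁, h₁⟩, C₂, hC₂, h₂⟩ := hN
  refine ⟨C₁ + (C₂ + 1), by positivity, fun x hx => ⟨?_, fun n => ?_⟩⟩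
  · calc _ ≤ ENNReal.ofReal C₁ * N x := h₁ x
      _ ≤ ENNReal.ofReal C₁ * 1 := by gcongr
      _ ≤ _ := by rw [mul_one]; exact ENNReal.ofReal_le_ofReal (by linarith)
  · have p : (0 : ℝ) < 2 ^ n := by positivity
    have g0 := hγ _ p
    have r0 := g0.trans_le (hle _ p)
    have hb : eKfun i₀ i₁ (2 ^ n) x / ENNReal.ofReal (γ (2 ^ n)) ≤ ENNReal.ofReal C₂ := by
      have e : eKfun i₀ i₁ (2 ^ n) x / ENNReal.ofReal (γ (2 ^ n)) ≤ eKNorm i₀ i₁ γ ⊤ x := by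
        unfold eKNorm eLq
        rw [if_pos rfl]
        have := le_iSup (fun n : ℤ => eKfun i₀ i₁ ((2 : ℝ) ^ n) x /
          ENNReal.ofReal (γ ((2 : ℝ) ^ n))) (n : ℤ)
        simpa only [zpow_natCast] using this
      calc _ ≤ _ := e
        _ ≤ _ := h₂ x
        _ ≤ ENNReal.ofReal C₂ * 1 := by gcongr
        _ = _ := mul_one _
    rw [ENNReal.div_le_iff (by simpa using g0) ENNReal.ofReal_ne_top,
      ← ENNReal.ofReal_mul hC₂.le] at hb
    have hlt : eKfun i₀ i₁ (2 ^ n) x < ENNReal.ofReal ((C₁ + (C₂ + 1)) * ρ (2 ^ n)) := by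
      refine hb.trans_lt ((ENNReal.ofReal_lt_ofReal_iff (by positivity)).2 ?_)
      have := mul_le_mul_of_nonneg_left (hle _ p) hC₂.le
      nlinarith [mul_pos hC₁ r0]
    unfold eKfun at hlt
    simp only [iInf_lt_iff] at hlt
    obtain ⟨a, b, hab, hlt⟩ := hlt
    exact ⟨a, b, hab, ((ENNReal.ofReal_lt_ofReal_iff (by positivity)).1 hlt).le⟩

theorem esum_right {E₀ E₁ V : Type*} [NormedAddCommGroup E₀] [NormedSpace ℝ E₀]
    [NormedAddCommGroup E₁] [NormedSpace ℝ E₁] [AddCommGroup V] [Module ℝ V]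
    (i₀ : E₀ →ₗ[ℝ] V) (i₁ : E₁ →ₗ[ℝ] V) (b : E₁) {r : ℝ} (h : ‖b‖ ≤ r) :
    esumNorm i₀ i₁ (i₁ b) ≤ ENNReal.ofReal r := by
  unfold esumNorm eKfun
  refine iInf_le_of_le 0 (iInf_le_of_le b (iInf_le_of_le (by simp) ?_))
  exact ENNReal.ofReal_le_ofReal (by simpa using h)

theorem enorm_scaled {E V : Type*} [NormedAddCommGroup E] [NormedSpace ℝ E]
    [AddCommGroup V] [Module ℝ V] (i : E →ₗ[ℝ] V) (a : E) {R : ℝ} (hR : 0 < R) (h : ‖a‖ ≤ R) :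
    enormOf i (R⁻¹ • i a) ≤ 1 := by
  unfold enormOf
  refine iInf_le_of_le (R⁻¹ • a) (iInf_le_of_le (by simp) ?_)
  have : ‖R⁻¹ • a‖ ≤ 1 := by
    rw [norm_smul, Real.norm_of_nonneg (by positivity), inv_mul_le_iff₀ hR]; simpa using h
  exact_mod_cast this

/-- Lions' approximation condition for the couple `(E₀, E₁)`. -/
def LionsCondition (i₀ : E₀ →ₗ[ℝ] V) (i₁ : E₁ →ₗ[ℝ] V) : Prop :=
  ∃ P : ℕ → V →ₗ[ℝ] V,
    (∀ (n : ℕ) (a : E₀), einterNorm i₀ i₁ (P n (i₀ a)) ≠ ∞) ∧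
    (∀ (n : ℕ) (b : E₁), einterNorm i₀ i₁ (P n (i₁ b)) ≠ ∞) ∧
    (∀ a : E₀, Filter.Tendsto (fun n => enormOf i₀ (P n (i₀ a) - i₀ a)) Filter.atTop (nhds 0)) ∧
    (∀ b : E₁, Filter.Tendsto (fun n => enormOf i₁ (P n (i₁ b) - i₁ b)) Filter.atTop (nhds 0))

/-- Persson's approximation condition for the couple `(E₀, E₁)`. -/
def PerssonCondition (i₀ : E₀ →ₗ[ℝ] V) (i₁ : E₁ →ₗ[ℝ] V) : Prop :=
  ∀ K : Set E₀, IsCompact K →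
    ∃ (C : ℝ) (P : Set (V →ₗ[ℝ] V)), 0 < C ∧
      (∀ p ∈ P,
        (∀ a : E₀, einterNorm i₀ i₁ (p (i₀ a)) ≠ ∞ ∧
          enormOf i₀ (p (i₀ a)) ≤ ENNReal.ofReal (C * ‖a‖)) ∧
        (∀ b : E₁, einterNorm i₀ i₁ (p (i₁ b)) ≠ ∞ ∧
          enormOf i₁ (p (i₁ b)) ≤ ENNReal.ofReal (C * ‖b‖))) ∧
      (∀ ε > 0, ∃ p ∈ P, ∀ x ∈ K, enormOf i₀ (p (i₀ x) - i₀ x) < ENNReal.ofReal ε)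

end LP

end

/-- Lions–Peetre type, same arriving space: if `E` is of class
`K_γ(E₀,E₁)` and `F` of class `K_ρ(F₀,F₁)` with `ρ ∈ ℬ^{+-}`, `γ(t) = 1/ρ̄(t⁻¹)`,
and `T : (E₀+E₁) × (F₀+F₁) → G` is bounded bilinear and compact from `E₀ × F₀` into
`G`, then `T` is compact from `E × F` into `G`. -/
theorem statement4 {E₀ E₁ F₀ F₁ VE VF G : Type*}
    [NormedAddCommGroup E₀] [NormedSpace ℝ E₀] [NormedAddCommGroup E₁] [NormedSpace ℝ E₁]
    [NormedAddCommGroup F₀] [NormedSpace ℝ F₀] [NormedAddCommGroup F₁] [NormedSpace ℝ F₁]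
    [AddCommGroup VE] [Module ℝ VE] [TopologicalSpace VE]
    [AddCommGroup VF] [Module ℝ VF] [TopologicalSpace VF]
    [NormedAddCommGroup G] [NormedSpace ℝ G] [CompleteSpace G]
    (iE₀ : E₀ →ₗ[ℝ] VE) (iE₁ : E₁ →ₗ[ℝ] VE) (hE : IsBanachCouple iE₀ iE₁)
    (iF₀ : F₀ →ₗ[ℝ] VF) (iF₁ : F₁ →ₗ[ℝ] VF) (hF : IsBanachCouple iF₀ iF₁)
    (ρ : ℝ → ℝ) (hρ : IsClassBpm ρ)
    (NE : VE → ℝ≥0∞) (hNE : IsClassK iE₀ iE₁ (fun t => (rbar ρ t⁻¹)⁻¹) NE)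
    (NF : VF → ℝ≥0∞) (hNF : IsClassK iF₀ iF₁ ρ NF)
    (T : VE →ₗ[ℝ] VF →ₗ[ℝ] G)
    (hbdd : eBilBdd (esumNorm iE₀ iE₁) (esumNorm iF₀ iF₁) (fun z : G => (‖z‖₊ : ℝ≥0∞))
      (fun x y => T x y))
    (hcpt : eBilCompact (enormOf iE₀) (enormOf iF₀) (fun z : G => (‖z‖₊ : ℝ≥0∞))
      (fun x y => T x y)) :
    eBilCompact NE NF (fun z : G => (‖z‖₊ : ℝ≥0∞)) (fun x y => T x y) := by
  have hB := hρ.toIsClassB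
  obtain ⟨C₁, hC₁, h₁⟩ := classK_decomp iE₀ iE₁ (fun t => (rbar ρ t⁻¹)⁻¹) ρ
    (fun t ht => gamma_pos hB ht) (fun t ht => gamma_le hB ht) NE hNE
  obtain ⟨C₂, hC₂, h₂⟩ := classK_decomp iF₀ iF₁ ρ ρ hB.pos (fun t _ => le_rfl) NF hNF
  obtain ⟨M, hM⟩ := hbdd
  have hT : ∀ x y (r s : ℝ), 0 ≤ r → 0 ≤ s → esumNorm iE₀ iE₁ x ≤ ENNReal.ofReal r →
      esumNorm iF₀ iF₁ y ≤ ENNReal.ofReal s → ‖T x y‖ ≤ M * r * s := by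
    intro x y r s hr hs hx hy
    have h : (‖T x y‖₊ : ℝ≥0∞) ≤ (M : ℝ≥0∞) * ENNReal.ofReal r * ENNReal.ofReal s :=
      (hM x y).trans (mul_le_mul' (mul_le_mul' le_rfl hx) hy)
    rw [← ENNReal.ofReal_coe_nnreal (p := M), ← ENNReal.ofReal_mul (by positivity),
      ← ENNReal.ofReal_mul (by positivity), ← ENNReal.ofReal_coe_nnreal] at h
    exact (ENNReal.ofReal_le_ofReal_iff (by positivity)).1 h
  intro ε hε
  set A : ℝ := M * (3 * C₁ * C₂) + 1 with hA
  have hA0 : 0 < A := by positivity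
  obtain ⟨n, hn⟩ := exists_small hρ (δ := min 1 (ε / (2 * A))) (by positivity)
  set δ : ℝ := min 1 (ε / (2 * A)) with hδ
  have hδ0 : 0 < δ := by positivity
  have hδ1 : δ ≤ 1 := min_le_left _ _
  have hδ2 : A * δ ≤ ε / 2 := by
    have : δ ≤ ε / (2 * A) := min_le_right _ _
    calc A * δ ≤ A * (ε / (2 * A)) := by gcongr
      _ = ε / 2 := by field_simp
  have p : (0 : ℝ) < 2 ^ n := by positivity
  have r0 := hB.pos _ p
  set R₁ := C₁ * ρ (2 ^ n) with hR₁
  set R₂ := C₂ * ρ (2 ^ n) with hR₂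
  have hR₁0 : 0 < R₁ := by positivity
  have hR₂0 : 0 < R₂ := by positivity
  obtain ⟨D, hD⟩ := hcpt (ε / (2 * (R₁ * R₂))) (by positivity)
  classical
  refine ⟨D.image (fun z => (R₁ * R₂) • z), fun x y hx hy => ?_⟩
  obtain ⟨hxs, hx⟩ := h₁ x hx
  obtain ⟨hys, hy⟩ := h₂ y hy
  obtain ⟨a, b, hxe, hab⟩ := hx n
  obtain ⟨c, d, hye, hcd⟩ := hy n
  have ha : ‖a‖ ≤ R₁ := by nlinarith [norm_nonneg b, mul_nonneg p.le (norm_nonneg b)]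
  have hc : ‖c‖ ≤ R₂ := by nlinarith [norm_nonneg d, mul_nonneg p.le (norm_nonneg d)]
  have hb : ‖b‖ ≤ C₁ * δ := by
    have : 2 ^ n * ‖b‖ ≤ 2 ^ n * (C₁ * δ) := by
      nlinarith [norm_nonneg a, mul_le_mul_of_nonneg_left hn.le hC₁.le]
    exact le_of_mul_le_mul_left this p
  have hd : ‖d‖ ≤ C₂ * δ := by
    have : 2 ^ n * ‖d‖ ≤ 2 ^ n * (C₂ * δ) := by
      nlinarith [norm_nonneg c, mul_le_mul_of_nonneg_left hn.le hC₂.le]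
    exact le_of_mul_le_mul_left this p
  obtain ⟨z, hz, hzlt⟩ := hD (R₁⁻¹ • iE₀ a) (R₂⁻¹ • iF₀ c)
    (enorm_scaled iE₀ a hR₁0 ha) (enorm_scaled iF₀ c hR₂0 hc)
  refine ⟨(R₁ * R₂) • z, Finset.mem_image_of_mem _ hz, ?_⟩
  have conv : ∀ (w : G) (r : ℝ), 0 < r → ((‖w‖₊ : ℝ≥0∞) < ENNReal.ofReal r ↔ ‖w‖ < r) := by
    intro w r hr
    rw [← ENNReal.ofReal_coe_nnreal, ENNReal.ofReal_lt_ofReal_iff hr, coe_nnnorm]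
  rw [conv _ _ (by positivity)] at hzlt
  rw [conv _ _ hε]
  have e0 : ‖T (iE₀ a) (iF₀ c) - (R₁ * R₂) • z‖ < ε / 2 := by
    have : T (iE₀ a) (iF₀ c) - (R₁ * R₂) • z =
        (R₁ * R₂) • (T (R₁⁻¹ • iE₀ a) (R₂⁻¹ • iF₀ c) - z) := by
      simp only [map_smul, LinearMap.smul_apply, smul_sub, smul_smul]
      congr 1
      rw [show R₁ * R₂ * (R₂⁻¹ * R₁⁻¹) = 1 by field_simp, one_smul]
    rw [this, norm_smul, Real.norm_of_nonneg (by positivity)]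
    calc _ < (R₁ * R₂) * (ε / (2 * (R₁ * R₂))) := by gcongr
      _ = ε / 2 := by field_simp
  have e1 := hT (iE₁ b) y _ _ (by positivity) (by positivity) (esum_right iE₀ iE₁ b hb) hys
  have e2 := hT x (iF₁ d) _ _ (by positivity) (by positivity) hxs (esum_right iF₀ iF₁ d hd)
  have e3 := hT (iE₁ b) (iF₁ d) _ _ (by positivity) (by positivity)
    (esum_right iE₀ iE₁ b hb) (esum_right iF₀ iF₁ d hd)
  have eq : T x y - (R₁ * R₂) • z = T (iE₁ b) y + T x (iF₁ d) - T (iE₁ b) (iF₁ d) +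
      (T (iE₀ a) (iF₀ c) - (R₁ * R₂) • z) := by
    rw [hxe, hye]; simp only [map_add, LinearMap.add_apply]; abel
  rw [eq]
  have t1 := norm_add_le (T (iE₁ b) y + T x (iF₁ d) - T (iE₁ b) (iF₁ d))
    (T (iE₀ a) (iF₀ c) - (R₁ * R₂) • z)
  have t2 := norm_sub_le (T (iE₁ b) y + T x (iF₁ d)) (T (iE₁ b) (iF₁ d))
  have t3 := norm_add_le (T (iE₁ b) y) (T x (iF₁ d))
  have e4 : (M : ℝ) * (C₁ * δ) * (C₂ * δ) ≤ M * C₁ * C₂ * δ := by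
    have : (M : ℝ) * (C₁ * δ) * (C₂ * δ) = M * C₁ * C₂ * δ * δ := by ring
    rw [this]
    exact mul_le_of_le_one_right (by positivity) hδ1
  have e5 : (M : ℝ) * (C₁ * δ) * C₂ + M * C₁ * (C₂ * δ) + M * C₁ * C₂ * δ ≤ A * δ := by
    rw [hA]; nlinarith
  linarith
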